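/- There exists a Turing machine with 276 states and 2 tape symbols which, started on the blank tape, halts, and the number of steps it performs before halting is greater than n(3). -/

import Mathlib

/-- `friedmanBlock s i` is the block `s_i s_{i+1} … s_{2i}` of the word `s`
(1-based indices); it has length `i + 1` when `2*i ≤ s.length`. -/
def friedmanBlock {α : Type} (s : List α) (i : ℕ) : List α :=
  (s.drop (i - 1)).take (i + 1)

/-- Friedman's property (*): there are no indices `1 ≤ i < j ≤ n/2` such that
`s^(i)` is a (scattered) subword of `s^(j)`.  Note `j ≤ n/2 ↔ 2*j ≤ n`. -/
def SatisfiesStar {α : Type} (s : List α) : Prop :=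
  ∀ i j : ℕ, 1 ≤ i → i < j → 2 * j ≤ s.length →
    ¬ (friedmanBlock s i).Sublist (friedmanBlock s j)

/-- `friedmanN k` = n(k), the length of a longest word over a `k`-letter
alphabet satisfying (*). -/
noncomputable def friedmanN (k : ℕ) : ℕ :=
  sSup {n : ℕ | ∃ s : List (Fin k), s.length = n ∧ SatisfiesStar s}

open Turing

/-- Iterated `TM0.step`: run the machine for `n` steps, returning `none` if it
halts strictly before that. -/
def multistep {Γ Λ : Type} [Inhabited Γ] [Inhabited Λ]
    (M : TM0.Machine Γ Λ) : ℕ → TM0.Cfg Γ Λ → Option (TM0.Cfg Γ Λ)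
  | 0, c => some c
  | n + 1, c => (TM0.step M c).bind (multistep M n)

/-- Started from configuration `c₀`, the machine reaches after exactly `T`
steps a configuration on which the transition function is undefined. -/
def HaltsFromIn {Γ Λ : Type} [Inhabited Γ] [Inhabited Λ]
    (M : TM0.Machine Γ Λ) (c₀ : TM0.Cfg Γ Λ) (T : ℕ) : Prop :=
  ∃ c, multistep M T c₀ = some c ∧ TM0.step M c = none

/-- The machine halts on the blank tape in exactly `T` steps. -/
def HaltsIn {Γ Λ : Type} [Inhabited Γ] [Inhabited Λ]
    (M : TM0.Machine Γ Λ) (T : ℕ) : Prop :=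
  HaltsFromIn M (TM0.init []) T

/-!
Concatenating the overlapping blocks `s^(1), s^(2), …` of a word with property (*) gives a word
whose consecutive disjoint blocks of lengths `2, 3, 4, …` do not embed into later ones. Such
admissible words form a tree under one-letter extension, and by Higman's lemma this tree is
well-founded. A depth-first search of the tree therefore terminates, and since every node costs a
step, it takes more steps than any admissible word has letters.

The search is a program for a machine whose cells hold a letter of the current word, a flag and a
mark. The flags delimit the blocks; two marks are the pointers with which an earlier block is
matched greedily against the last one, and with which the cells of the last block are counted off
to find where the next one ends. Compiling the program for three letters, with four binary tape
squares per cell, takes 246 states.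
-/

namespace FriedmanSearch

open StateTransition
open scoped List

section Combinatorics

/-- The position at which block `m` starts when a word is cut into consecutive disjoint blocks of
lengths `2, 3, 4, …`, with blocks and positions numbered from `0`. -/
def blockStart (m : ℕ) : ℕ := ∑ j ∈ Finset.range m, (j + 2)

lemma blockStart_succ (m : ℕ) : blockStart (m + 1) = blockStart m + (m + 2) :=
  Finset.sum_range_succ _ _

lemma blockStart_strictMono : StrictMono blockStart :=
  strictMono_nat_of_lt_succ fun m => by rw [blockStart_succ]; omega

variable {α : Type*}

/-- Block `j` of a word cut into consecutive disjoint blocks of lengths `2, 3, 4, …`; it is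
truncated if the word is too short. -/
def block (w : List α) (j : ℕ) : List α := (w.drop (blockStart j)).take (j + 2)

/-- The disjoint-block variant of property (*): no complete block contains an earlier block as a
scattered subword. -/
def Admissible (w : List α) : Prop :=
  ∀ i j, i < j → blockStart (j + 1) ≤ w.length → ¬ block w i <+ block w j

lemma block_eq_drop {w : List α} {m : ℕ} (hw : w.length = blockStart (m + 1)) :
    block w m = w.drop (blockStart m) :=
  List.take_of_length_le (by rw [List.length_drop, hw, blockStart_succ]; omega)

lemma block_eq_of_isPrefix {v w : List α} (h : v <+: w) {j : ℕ}
    (hj : blockStart (j + 1) ≤ v.length) : block v j = block w j := by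
  obtain ⟨u, rfl⟩ := h
  rw [blockStart_succ] at hj
  rw [block, block, List.drop_append_of_le_length (by omega),
    List.take_append_of_le_length (by rw [List.length_drop]; omega)]

lemma admissible_nil : Admissible ([] : List α) := by
  intro i j _ hj
  rw [List.length_nil, blockStart_succ] at hj
  omega

lemma Admissible.of_isPrefix {v w : List α} (hw : Admissible w) (h : v <+: w) : Admissible v := by
  intro i j hij hj
  have hi : blockStart (i + 1) ≤ blockStart (j + 1) := blockStart_strictMono.monotone (by omega)
  rw [block_eq_of_isPrefix h (hi.trans hj), block_eq_of_isPrefix h hj]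
  exact hw i j hij (hj.trans h.length_le)

lemma Admissible.concat {w : List α} (hw : Admissible w) (c : α)
    (h : ∀ i j, i < j → blockStart (j + 1) = w.length + 1 →
      ¬ block (w ++ [c]) i <+ block (w ++ [c]) j) : Admissible (w ++ [c]) := by
  intro i j hij hj
  rw [List.length_append, List.length_singleton] at hj
  rcases hj.eq_or_lt with hj | hj
  · exact h i j hij hj
  · have hi : blockStart (i + 1) ≤ blockStart (j + 1) := blockStart_strictMono.monotone (by omega)
    have hpre := w.prefix_append [c]
    rw [← block_eq_of_isPrefix hpre (by omega), ← block_eq_of_isPrefix hpre (by omega)]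
    exact hw i j hij (by omega)

/-- `AdmissibleChild v w`: the word `v` is admissible and extends `w` by one letter, i.e. `v` is a
child of `w` in the tree of admissible words. -/
def AdmissibleChild (v w : List α) : Prop := Admissible v ∧ ∃ c, v = w ++ [c]

lemma exists_sublist_of_finite [Finite α] (B : ℕ → List α) : ∃ i j, i < j ∧ B i <+ B j := by
  have higman := Set.PartiallyWellOrderedOn.partiallyWellOrderedOn_sublistForall₂
    (r := (· = · : α → α → Prop)) (Set.finite_univ.partiallyWellOrderedOn)
  obtain ⟨i, j, hij, h⟩ := Set.partiallyWellOrderedOn_iff_exists_lt.1 higman B (by simp)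
  obtain ⟨l, hl, hsub⟩ := List.sublistForall₂_iff.1 h
  rw [List.forall₂_eq_eq_eq] at hl
  exact ⟨i, j, hij, hl ▸ hsub⟩

lemma wellFounded_admissibleChild [Finite α] :
    WellFounded (AdmissibleChild : List α → List α → Prop) := by
  rw [wellFounded_iff_isEmpty_descending_chain]
  refine ⟨fun ⟨f, hf⟩ => ?_⟩
  have hlen (n : ℕ) : n ≤ (f n).length := by
    induction n with
    | zero => exact Nat.zero_le _
    | succ n ih =>
      obtain ⟨c, hc⟩ := (hf n).2
      rw [hc, List.length_append, List.length_singleton]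
      omega
  have hpre {m n : ℕ} (hmn : m ≤ n) : f m <+: f n := by
    induction n, hmn using Nat.le_induction with
    | base => exact List.prefix_rfl
    | succ n _ ih =>
      obtain ⟨c, hc⟩ := (hf n).2
      exact ih.trans (hc ▸ List.prefix_append _ _)
  obtain ⟨i, j, hij, hsub⟩ := exists_sublist_of_finite fun j => block (f (blockStart (j + 1))) j
  have hle : blockStart (i + 1) ≤ blockStart (j + 1) := blockStart_strictMono.monotone (by omega)
  have hadm : Admissible (f (blockStart (j + 1))) := by
    rw [blockStart_succ]
    exact (hf _).1
  rw [block_eq_of_isPrefix (hpre hle) (hlen _)] at hsub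
  exact hadm i j hij (hlen _) hsub

variable {B : ℕ → List α} {m : ℕ}

lemma length_flatMap_range (hB : ∀ j < m, (B j).length = j + 2) :
    ((List.range m).flatMap B).length = blockStart m := by
  induction m with
  | zero => rfl
  | succ m ih =>
    rw [List.range_succ, List.flatMap_append, List.length_append, List.flatMap_singleton,
      ih fun j hj => hB j (by omega), hB m (by omega), blockStart_succ]

lemma block_flatMap_range_append (hB : ∀ j < m, (B j).length = j + 2) (v : List α) {j : ℕ}
    (hj : j < m) : block ((List.range m).flatMap B ++ v) j = B j := by
  induction m generalizing v with
  | zero => omega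
  | succ m ih =>
    have hB' : ∀ j < m, (B j).length = j + 2 := fun j hj => hB j (by omega)
    rw [List.range_succ, List.flatMap_append, List.append_assoc, List.flatMap_singleton]
    rcases Nat.lt_succ_iff_lt_or_eq.1 hj with hj | rfl
    · exact ih hB' _ hj
    · rw [block, List.drop_left' (length_flatMap_range hB'), List.take_left' (hB j (by omega))]

lemma length_friedmanBlock_succ {α : Type} {s : List α} {j : ℕ} (hj : j < s.length / 2) :
    (friedmanBlock s (j + 1)).length = j + 2 := by
  rw [friedmanBlock, List.length_take, List.length_drop]
  omega

-- The overlapping blocks of `s` become the disjoint blocks of the concatenation; the final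
-- `s.take` makes it at least as long as `s` without completing another block.
lemma exists_admissible_of_satisfiesStar {α : Type} {s : List α} (hs : SatisfiesStar s) :
    ∃ w : List α, Admissible w ∧ s.length ≤ w.length := by
  have hB : ∀ j < s.length / 2, (friedmanBlock s (j + 1)).length = j + 2 :=
    fun j => length_friedmanBlock_succ
  have hlen := length_flatMap_range hB
  have hmono := blockStart_strictMono.le_apply (x := s.length / 2)
  refine ⟨(List.range (s.length / 2)).flatMap (fun j => friedmanBlock s (j + 1)) ++
    s.take (s.length / 2 + 1), fun i j hij hj => ?_, ?_⟩
  · have hjm : j < s.length / 2 := by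
      by_contra! hjm
      have hstart : blockStart (s.length / 2 + 1) ≤ blockStart (j + 1) :=
        blockStart_strictMono.monotone (by omega)
      rw [blockStart_succ] at hstart
      rw [List.length_append, hlen, List.length_take] at hj
      omega
    rw [block_flatMap_range_append hB _ (hij.trans hjm), block_flatMap_range_append hB _ hjm]
    exact hs (i + 1) (j + 1) (by omega) (by omega) (by omega)
  · rw [List.length_append, hlen, List.length_take]
    omega

lemma friedmanN_lt {k T : ℕ} (h : ∀ w : List (Fin k), Admissible w → w.length < T) :
    friedmanN k < T := by
  have hbound : ∀ n ∈ {n : ℕ | ∃ s : List (Fin k), s.length = n ∧ SatisfiesStar s}, n < T := by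
    rintro _ ⟨s, rfl, hs⟩
    obtain ⟨w, hw, hsw⟩ := exists_admissible_of_satisfiesStar hs
    exact hsw.trans_lt (h w hw)
  refine hbound _ <|
    Nat.sSup_mem ⟨0, [], rfl, fun i j _ _ hj => ?_⟩ ⟨T, fun n hn => (hbound n hn).le⟩
  rw [List.length_nil] at hj
  omega

end Combinatorics

section Transition

/-- `Leads f n a b`: iterating the partial transition function `f` leads from `a` to `b` in at
least `n` steps. -/
inductive Leads {σ : Type*} (f : σ → Option σ) : ℕ → σ → σ → Prop
  | refl (a : σ) : Leads f 0 a a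
  | head {m n : ℕ} {a b c : σ} (hab : b ∈ f a) (hbc : Leads f m b c) (hn : n ≤ m + 1) :
      Leads f n a c

namespace Leads

variable {σ τ : Type*} {f : σ → Option σ} {g : τ → Option τ} {m n : ℕ} {a b c : σ}

lemma mono (h : Leads f n a b) (hmn : m ≤ n) : Leads f m a b := by
  cases h with
  | refl => exact Nat.le_zero.1 hmn ▸ refl a
  | head hab hbc hn => exact head hab hbc (hmn.trans hn)

lemma trans (hab : Leads f m a b) (hbc : Leads f n b c) : Leads f (m + n) a c := by
  induction hab with
  | refl => exact (Nat.zero_add n).symm ▸ hbc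
  | head hab _ hn ih => exact head hab (ih hbc) (by omega)

lemma of_reaches (h : Reaches f a b) : Leads f 0 a b := by
  induction h using Relation.ReflTransGen.head_induction_on with
  | refl => exact refl b
  | head hac _ ih => exact head hac ih (by omega)

lemma of_reaches₁ (h : Reaches₁ f a b) : Leads f 1 a b := by
  obtain ⟨c, hac, hcb⟩ := Relation.TransGen.head'_iff.1 h
  exact head hac (of_reaches hcb) le_rfl

lemma exists_of_respects {R : σ → τ → Prop} (hR : Respects f g R) (h : Leads f n a b) {a' : τ}
    (ha : R a a') : ∃ b', R b b' ∧ Leads g n a' b' := by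
  induction h generalizing a' with
  | refl => exact ⟨a', ha, refl a'⟩
  | head hab _ hn ih =>
    obtain ⟨b', hb, hab'⟩ := tr_reaches₁ hR ha (Relation.TransGen.single hab)
    obtain ⟨c', hc, hbc'⟩ := ih hb
    exact ⟨c', hc, ((of_reaches₁ hab').trans hbc').mono (by omega)⟩

end Leads

/-- `HaltsAfter f n a`: iterating the partial transition function `f` from `a` comes to a halt, in
at least `n` steps. -/
def HaltsAfter {σ : Type*} (f : σ → Option σ) (n : ℕ) (a : σ) : Prop :=
  ∃ b, Leads f n a b ∧ f b = none

lemma HaltsAfter.of_respects {σ τ : Type*} {f : σ → Option σ} {g : τ → Option τ} {n : ℕ}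
    {R : σ → τ → Prop} {a : σ} {a' : τ} (h : HaltsAfter f n a) (hR : Respects f g R)
    (ha : R a a') : HaltsAfter g n a' := by
  obtain ⟨b, hab, hb⟩ := h
  obtain ⟨b', hbb', hab'⟩ := hab.exists_of_respects hR ha
  have hb' := hR hbb'
  rw [hb] at hb'
  exact ⟨b', hab', hb'⟩

lemma HaltsAfter.exists_haltsFromIn {Γ Λ : Type} [Inhabited Γ] [Inhabited Λ]
    {M : TM0.Machine Γ Λ} {n : ℕ} {c : TM0.Cfg Γ Λ} (h : HaltsAfter (TM0.step M) n c) :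
    ∃ T, n ≤ T ∧ HaltsFromIn M c T := by
  obtain ⟨d, hcd, hd⟩ := h
  induction hcd with
  | refl a => exact ⟨0, le_rfl, a, rfl, hd⟩
  | head hab _ hn ih =>
    obtain ⟨T, hT, e, he, hnone⟩ := ih hd
    exact ⟨T + 1, by omega, e, by rw [multistep, hab, Option.bind_some, he], hnone⟩

instance {σ : Type*} (f : σ → Option σ) : Trans (Reaches f) (Reaches f) (Reaches f) :=
  ⟨Relation.ReflTransGen.trans⟩

section Loops

variable {σ : Type*} {f : σ → Option σ} {x y : ℤ}

lemma reaches_of_forall_succ (cfg : ℤ → σ) (hxy : x ≤ y)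
    (h : ∀ z, x ≤ z → z < y → Reaches f (cfg z) (cfg (z + 1))) :
    Reaches f (cfg x) (cfg y) := by
  induction y, hxy using Int.leInduction with
  | base => exact .refl
  | succ y hxy ih => exact (ih fun z hxz hzy => h z hxz (by omega)).trans (h y hxy (by omega))

lemma reaches_of_forall_pred (cfg : ℤ → σ) (hyx : y ≤ x)
    (h : ∀ z, y < z → z ≤ x → Reaches f (cfg z) (cfg (z - 1))) :
    Reaches f (cfg x) (cfg y) := by
  induction x, hyx using Int.leInduction with
  | base => exact .refl
  | succ x hyx ih =>
    have hstep := h (x + 1) (by omega) le_rfl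
    rw [add_sub_cancel_right] at hstep
    exact hstep.trans (ih fun z hyz hzx => h z hyz (by omega))

end Loops

end Transition

section Machines

/-- A configuration of a `TM0` machine with the tape presented as a function on `ℤ`, which makes
absolute positions available. -/
structure TapeCfg (Γ Λ : Type) where
  state : Λ
  head : ℤ
  tape : ℤ → Γ

variable {Γ Λ : Type}

/-- The effect of a head movement on an absolute position. -/
def shift : Dir → ℤ → ℤ
  | .left, x => x - 1
  | .right, x => x + 1

variable [Inhabited Λ]

/-- The step function of a `TM0` machine on configurations with absolute positions. -/
def tapeStep (M : TM0.Machine Γ Λ) (c : TapeCfg Γ Λ) : Option (TapeCfg Γ Λ) :=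
  (M c.state (c.tape c.head)).map fun
    | (q, .move d) => ⟨q, shift d c.head, c.tape⟩
    | (q, .write a) => ⟨q, c.head, Function.update c.tape c.head a⟩

variable [Inhabited Γ]

/-- `IsView c C`: the configuration `c` is the `TM0` configuration `C` seen from some choice of
origin on the tape. -/
def IsView (c : TapeCfg Γ Λ) (C : TM0.Cfg Γ Λ) : Prop :=
  C.q = c.state ∧ ∀ i, C.Tape.nth i = c.tape (c.head + i)

lemma isView_init (x : ℤ) :
    IsView ⟨(default : Λ), x, fun _ => (default : Γ)⟩ (TM0.init []) := by
  refine ⟨rfl, fun i => ?_⟩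
  cases i with
  | ofNat n => cases n <;> rfl
  | negSucc n => rfl

lemma respects_tapeStep (M : TM0.Machine Γ Λ) : Respects (tapeStep M) (TM0.step M) IsView := by
  rintro ⟨q, x, t⟩ ⟨q', T⟩ ⟨rfl, hT⟩
  have hhead : T.head = t x := by simpa using hT 0
  rcases hM : M q' (t x) with _ | ⟨r, d | a⟩
  · simp [tapeStep, TM0.step, hhead, hM]
  · simp only [tapeStep, hM, Option.map_some]
    refine ⟨⟨r, T.move d⟩, ⟨rfl, fun i => ?_⟩, .single (by simp [TM0.step, hhead, hM])⟩
    cases d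
    · simp only [Tape.move_left_nth, shift, hT]
      congr 1; ring
    · simp only [Tape.move_right_nth, shift, hT]
      congr 1; ring
  · simp only [tapeStep, hM, Option.map_some]
    refine ⟨⟨r, T.write a⟩, ⟨rfl, fun i => ?_⟩, .single (by simp [TM0.step, hhead, hM])⟩
    simp [Tape.write_nth, Function.update_apply, hT]

lemma exists_pointedMap_injOn {S : Finset Λ} {n : ℕ} [NeZero n] (hn : S.card ≤ n) :
    ∃ g : PointedMap Λ (Fin n), Set.InjOn g S := by
  classical
  obtain ⟨e⟩ : Nonempty (S ↪ Fin n) := Function.Embedding.nonempty_of_card_le (by simpa using hn)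
  let g (q : Λ) : Fin n := if h : q ∈ S then e ⟨q, h⟩ else default
  refine ⟨⟨Equiv.swap (g default) default ∘ g, Equiv.swap_apply_left _ _⟩, fun p hp q hq h => ?_⟩
  have hg : g p = g q := (Equiv.swap (g default) default).injective h
  simp only [g, dif_pos (Finset.mem_coe.1 hp), dif_pos (Finset.mem_coe.1 hq)] at hg
  exact congrArg Subtype.val (e.injective hg)

lemma exists_machine_fin {Γ' : Type} [Inhabited Γ'] {M : TM0.Machine Γ Λ} {S : Finset Λ}
    (hS : TM0.Supports M (S : Set Λ)) (e : Γ ≃ Γ') (he : e default = default) {n : ℕ} [NeZero n]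
    (hn : S.card ≤ n) :
    ∃ (M' : TM0.Machine Γ' (Fin n)) (R : TM0.Cfg Γ Λ → TM0.Cfg Γ' (Fin n) → Prop),
      Respects (TM0.step M) (TM0.step M') R ∧ R (TM0.init []) (TM0.init []) := by
  obtain ⟨g, hg⟩ := exists_pointedMap_injOn hn
  let f₁ : PointedMap Γ Γ' := ⟨e, he⟩
  let f₂ : PointedMap Γ' Γ := ⟨e.symm, e.symm_apply_eq.2 he.symm⟩
  exact ⟨M.map f₁ f₂ g (Function.invFunOn g S), _,
    TM0.Machine.map_respects M f₁ f₂ g _ hS e.symm_apply_apply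
      fun q hq => hg.leftInvOn_invFunOn hq,
    hS.1, TM0.map_init f₁ g []⟩

end Machines

section Programs

/-- Position of a cell content in the cyclic order `blank, 0, 1, …, k - 1` of contents. -/
def letterIndex {k : ℕ} : Option (Fin k) → ℕ
  | none => 0
  | some c => c + 1

/-- The letter with number `i`, or the blank if there is no such letter. -/
def letterAt {k : ℕ} (i : ℕ) : Option (Fin k) := if h : i < k then some ⟨i, h⟩ else none

/-- The successor in the cyclic order `blank, 0, 1, …, k - 1` of cell contents. -/
def nextLetter {k : ℕ} (o : Option (Fin k)) : Option (Fin k) := letterAt (letterIndex o)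

/-- Instructions for a machine whose cells hold an optional letter of a `k`-letter alphabet, a
flag bit and a mark bit. The arguments of type `Λ` are the labels of the instructions to continue
with; `seekMark` moves at least once and stops at the first marked cell. -/
inductive Instr (k : ℕ) (Λ : Type)
  | halt
  | move (d : Dir) (next : Λ)
  | seekMark (d : Dir) (next : Λ)
  | branchMark (yes no : Λ)
  | branchFlag (yes no : Λ)
  | branchLetter (target : Option (Fin k) → Λ)
  | addMark (next : Λ)
  | eraseMark (next : Λ)
  | addFlag (next : Λ)
  | advanceLetter (next overflow : Λ)

/-- A configuration of a program: the label of the current instruction, the position of the head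
and the contents of all cells. -/
structure Config (k : ℕ) (Λ : Type) where
  label : Λ
  pos : ℤ
  letter : ℤ → Option (Fin k)
  flags : Finset ℤ
  marks : Finset ℤ

variable {k : ℕ} {Λ : Type}

/-- Executes one instruction of the program `P`. -/
def step (P : Λ → Instr k Λ) (c : Config k Λ) : Option (Config k Λ) :=
  match P c.label with
  | .halt => none
  | .move d next => some { c with label := next, pos := shift d c.pos }
  | .seekMark d next =>
    some { c with
      label := if shift d c.pos ∈ c.marks then next else c.label
      pos := shift d c.pos }
  | .branchMark yes no => some { c with label := if c.pos ∈ c.marks then yes else no }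
  | .branchFlag yes no => some { c with label := if c.pos ∈ c.flags then yes else no }
  | .branchLetter target => some { c with label := target (c.letter c.pos) }
  | .addMark next => some { c with label := next, marks := insert c.pos c.marks }
  | .eraseMark next => some { c with label := next, marks := c.marks.erase c.pos }
  | .addFlag next => some { c with label := next, flags := insert c.pos c.flags }
  | .advanceLetter next overflow =>
    some { c with
      label := if (nextLetter (c.letter c.pos)).isSome then next else overflow
      letter := Function.update c.letter c.pos (nextLetter (c.letter c.pos)) }

end Programs

section Compilation

/-- The content of a cell that is stored as two given bits; the pair `(high, low)` is the binary
expansion of the `letterIndex` of the content. -/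
def letterOfBits : Bool → Bool → Option (Fin 3)
  | false, false => none
  | false, true => some 0
  | true, false => some 1
  | true, true => some 2

/-- The high bit of the two bits that store the content of a cell. -/
def highBit (o : Option (Fin 3)) : Bool := (letterIndex o).testBit 1

/-- The low bit of the two bits that store the content of a cell. -/
def lowBit (o : Option (Fin 3)) : Bool := (letterIndex o).testBit 0

lemma letterOfBits_highBit_lowBit (o : Option (Fin 3)) :
    letterOfBits (highBit o) (lowBit o) = o := by
  revert o; decide

lemma highBit_letterOfBits (high low : Bool) : highBit (letterOfBits high low) = high := by
  revert high low; decide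

lemma lowBit_letterOfBits (high low : Bool) : lowBit (letterOfBits high low) = low := by
  revert high low; decide

/-- The bits on the tape of the compiled machine. Cell `x` occupies the squares
`4 * x, …, 4 * x + 3`, which hold the high bit of its content, its mark, the low bit of its content
and its flag. -/
def bits (letter : ℤ → Option (Fin 3)) (flags marks : Finset ℤ) (y : ℤ) : Bool :=
  if y % 4 = 0 then highBit (letter (y / 4))
  else if y % 4 = 1 then y / 4 ∈ marks
  else if y % 4 = 2 then lowBit (letter (y / 4))
  else y / 4 ∈ flags

variable {letter : ℤ → Option (Fin 3)} {flags marks : Finset ℤ} {x : ℤ} {b : Bool}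

lemma bits_high : bits letter flags marks (4 * x) = highBit (letter x) := by
  have hdiv : 4 * x / 4 = x := by omega
  have hmod : 4 * x % 4 = 0 := by omega
  simp [bits, hdiv, hmod]

lemma bits_mark : bits letter flags marks (4 * x + 1) = decide (x ∈ marks) := by
  have hdiv : (4 * x + 1) / 4 = x := by omega
  have hmod : (4 * x + 1) % 4 = 1 := by omega
  simp [bits, hdiv, hmod]

lemma bits_low : bits letter flags marks (4 * x + 2) = lowBit (letter x) := by
  have hdiv : (4 * x + 2) / 4 = x := by omega
  have hmod : (4 * x + 2) % 4 = 2 := by omega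
  simp [bits, hdiv, hmod]

lemma bits_flag : bits letter flags marks (4 * x + 3) = decide (x ∈ flags) := by
  have hdiv : (4 * x + 3) / 4 = x := by omega
  have hmod : (4 * x + 3) % 4 = 3 := by omega
  simp [bits, hdiv, hmod]

lemma update_bits_high : Function.update (bits letter flags marks) (4 * x) b =
    bits (Function.update letter x (letterOfBits b (lowBit (letter x)))) flags marks := by
  funext y
  by_cases hy : y = 4 * x
  · subst hy
    rw [Function.update_self, bits_high, Function.update_self, highBit_letterOfBits]
  · by_cases hdiv : y / 4 = x
    · have hmod : ¬ y % 4 = 0 := by omega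
      simp [bits, Function.update_of_ne hy, hdiv, hmod, lowBit_letterOfBits]
    · simp [bits, Function.update_of_ne hy, Function.update_of_ne hdiv]

lemma update_bits_low : Function.update (bits letter flags marks) (4 * x + 2) b =
    bits (Function.update letter x (letterOfBits (highBit (letter x)) b)) flags marks := by
  funext y
  by_cases hy : y = 4 * x + 2
  · subst hy
    rw [Function.update_self, bits_low, Function.update_self, lowBit_letterOfBits]
  · by_cases hdiv : y / 4 = x
    · have hmod : ¬ y % 4 = 2 := by omega
      simp [bits, Function.update_of_ne hy, hdiv, hmod, highBit_letterOfBits]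
    · simp [bits, Function.update_of_ne hy, Function.update_of_ne hdiv]

lemma update_bits_mark {marks' : Finset ℤ} (hx : decide (x ∈ marks') = b)
    (hne : ∀ z, z ≠ x → (z ∈ marks' ↔ z ∈ marks)) :
    Function.update (bits letter flags marks) (4 * x + 1) b = bits letter flags marks' := by
  funext y
  by_cases hy : y = 4 * x + 1
  · subst hy
    rw [Function.update_self, bits_mark, hx]
  · by_cases hmod : y % 4 = 1
    · have hdiv : y / 4 ≠ x := by omega
      simp [bits, Function.update_of_ne hy, hmod, hne _ hdiv]
    · simp [bits, Function.update_of_ne hy, hmod]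

lemma update_bits_flag : Function.update (bits letter flags marks) (4 * x + 3) true =
    bits letter (insert x flags) marks := by
  funext y
  by_cases hy : y = 4 * x + 3
  · subst hy
    rw [Function.update_self, bits_flag, decide_eq_true (Finset.mem_insert_self _ _)]
  · by_cases hmod : y % 4 = 3
    · have hdiv : y / 4 ≠ x := by omega
      simp [bits, Function.update_of_ne hy, hmod, hdiv]
    · have hcases : y % 4 = 0 ∨ y % 4 = 1 ∨ y % 4 = 2 := by omega
      rcases hcases with h | h | h <;> simp [bits, Function.update_of_ne hy, h]

variable {Λ : Type}

/-- A state of the compiled machine is an instruction label together with a phase. -/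
abbrev State (Λ : Type) := Λ × ℕ

/-- A row of a transition table: a transition for each symbol read. -/
abbrev Row (Λ : Type) := Bool → Option (State Λ × TM0.Stmt Bool)

/-- The row that moves the head regardless of the symbol read. -/
def moveRow (d : Dir) (q : State Λ) : Row Λ := fun _ => some (q, .move d)

/-- The row that writes `b` regardless of the symbol read. -/
def writeRow (b : Bool) (q : State Λ) : Row Λ := fun _ => some (q, .write b)

/-- The row that branches on the symbol read and moves the head. -/
def branchMoveRow (d : Dir) (yes no : State Λ) : Row Λ :=
  fun b => some (bif b then yes else no, .move d)

/-- The row that branches on the symbol read and leaves it unchanged. -/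
def branchRow (yes no : State Λ) : Row Λ := fun b => some (bif b then yes else no, .write b)

/-- The row that branches on the symbol read and flips it. -/
def branchFlipRow (yes no : State Λ) : Row Λ := fun b => some (bif b then yes else no, .write !b)

/-- The rows of the transition table for the states `(l, 0), (l, 1), …` that implement an
instruction with label `l`. The head rests on the mark square of the current cell. -/
def rows (l : Λ) : Instr 3 Λ → List (Row Λ)
  | .halt => [fun _ => none]
  | .move d next => [moveRow d (l, 1), moveRow d (l, 2), moveRow d (l, 3), moveRow d (next, 0)]
  | .seekMark d next =>
    [moveRow d (l, 1), moveRow d (l, 2), moveRow d (l, 3), moveRow d (l, 4),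
      branchRow (next, 0) (l, 0)]
  | .branchMark yes no => [branchRow (yes, 0) (no, 0)]
  | .branchFlag yes no =>
    [moveRow .right (l, 1), moveRow .right (l, 2), branchMoveRow .left (l, 4) (l, 3),
      moveRow .left (no, 0), moveRow .left (yes, 0)]
  | .branchLetter target =>
    [moveRow .left (l, 1), branchMoveRow .right (l, 3) (l, 2), moveRow .right (l, 4),
      moveRow .right (l, 5),
      branchMoveRow .left (target (letterOfBits false true), 0)
        (target (letterOfBits false false), 0),
      branchMoveRow .left (target (letterOfBits true true), 0)
        (target (letterOfBits true false), 0)]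
  | .addMark next => [writeRow true (next, 0)]
  | .eraseMark next => [writeRow false (next, 0)]
  | .addFlag next =>
    [moveRow .right (l, 1), moveRow .right (l, 2), writeRow true (l, 3), moveRow .left (l, 4),
      moveRow .left (next, 0)]
  | .advanceLetter next overflow =>
    [moveRow .right (l, 1), branchFlipRow (l, 3) (l, 2), moveRow .left (next, 0),
      moveRow .left (l, 4), moveRow .left (l, 5), branchFlipRow (l, 7) (l, 6),
      moveRow .right (next, 0), moveRow .right (overflow, 0)]

lemma rows_target {l : Λ} {I : Instr 3 Λ} {row : Row Λ} (hrow : row ∈ rows l I) {b : Bool}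
    {q : State Λ} {s : TM0.Stmt Bool} (hq : (q, s) ∈ row b) :
    q.2 = 0 ∨ q.1 = l ∧ q.2 < (rows l I).length := by
  cases I <;> simp only [rows, List.mem_cons, List.not_mem_nil, or_false] at hrow <;>
    rcases hrow with rfl | rfl | rfl | rfl | rfl | rfl | rfl | rfl <;>
    simp_all [moveRow, writeRow, branchMoveRow, branchRow, branchFlipRow, rows] <;>
    cases b <;> simp_all [← hq.1]

lemma length_rows_pos (l : Λ) (I : Instr 3 Λ) : 0 < (rows l I).length := by
  cases I <;> simp [rows]

/-- The configuration of the compiled machine that represents a configuration of the program. -/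
def encode (c : Config 3 Λ) : TapeCfg Bool (State Λ) :=
  ⟨(c.label, 0), 4 * c.pos + 1, bits c.letter c.flags c.marks⟩

section UsedStates

variable [DecidableEq Λ] [Fintype Λ]

/-- The set of states used by the machine compiled from `P`. -/
def usedStates (P : Λ → Instr 3 Λ) : Finset (State Λ) :=
  Finset.univ.biUnion fun l => (Finset.range (rows l (P l)).length).image (l, ·)

lemma card_usedStates_le (P : Λ → Instr 3 Λ) :
    (usedStates P).card ≤ ∑ l, (rows l (P l)).length :=
  Finset.card_biUnion_le.trans <| Finset.sum_le_sum fun _ _ =>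
    Finset.card_image_le.trans_eq (Finset.card_range _)

lemma mem_usedStates {P : Λ → Instr 3 Λ} {q : State Λ} :
    q ∈ usedStates P ↔ q.2 < (rows q.1 (P q.1)).length := by
  obtain ⟨l, j⟩ := q
  simp [usedStates]

end UsedStates

variable [Inhabited Λ]

/-- The Turing machine over the alphabet `Bool` that executes the program `P`. -/
def compile (P : Λ → Instr 3 Λ) : TM0.Machine Bool (State Λ) :=
  fun q b => (rows q.1 (P q.1))[q.2]?.bind (· b)

lemma supports_compile [DecidableEq Λ] [Fintype Λ] (P : Λ → Instr 3 Λ) :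
    TM0.Supports (compile P) (usedStates P : Set (State Λ)) := by
  have hzero (l : Λ) : (l, 0) ∈ usedStates P := mem_usedStates.2 (length_rows_pos l (P l))
  refine ⟨hzero default, fun {q b r s} hr _ => ?_⟩
  obtain ⟨row, hrow, hs⟩ := Option.mem_bind_iff.1 hr
  rcases rows_target (List.mem_of_getElem? hrow) hs with h | ⟨h, hlt⟩
  · exact (Prod.ext rfl h : r = (r.1, 0)) ▸ hzero r.1
  · exact Finset.mem_coe.2 (mem_usedStates.2 (h ▸ hlt))

section Simulation

variable {P : Λ → Instr 3 Λ} {l : Λ}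

lemma compile_apply {I : Instr 3 Λ} (hl : P l = I) (j : ℕ) (b : Bool) :
    compile P (l, j) b = (rows l I)[j]?.bind (· b) := by
  rw [compile, hl]

variable {M : TM0.Machine Bool (State Λ)} {q r : State Λ} {y : ℤ} {t : ℤ → Bool}

lemma reaches₁_of_move {y' : ℤ} {d : Dir} (hb : t y = b) (hM : M q b = some (r, .move d))
    (hy : shift d y = y' := by simp only [shift] <;> ring) :
    Reaches₁ (tapeStep M) ⟨q, y, t⟩ ⟨r, y', t⟩ :=
  .single (by simp [tapeStep, hb, hM, hy])

lemma reaches₁_of_write {t' : ℤ → Bool} {b' : Bool} (hb : t y = b)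
    (hM : M q b = some (r, .write b')) (ht : Function.update t y b' = t') :
    Reaches₁ (tapeStep M) ⟨q, y, t⟩ ⟨r, y, t'⟩ :=
  .single (by simp [tapeStep, hb, hM, ht])

lemma reaches₁_of_rewrite (hb : t y = b) (hM : M q b = some (r, .write b)) :
    Reaches₁ (tapeStep M) ⟨q, y, t⟩ ⟨r, y, t⟩ :=
  reaches₁_of_write hb hM (hb ▸ Function.update_eq_self y t)

lemma shift_four (d : Dir) (x : ℤ) :
    shift d (shift d (shift d (shift d (4 * x + 1)))) = 4 * shift d x + 1 := by
  cases d <;> simp only [shift] <;> ring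

lemma reaches₁_move {d : Dir} {next : Λ} (hl : P l = .move d next) (t : ℤ → Bool) :
    Reaches₁ (tapeStep (compile P)) ⟨(l, 0), 4 * x + 1, t⟩ ⟨(next, 0), 4 * shift d x + 1, t⟩ :=
  (((reaches₁_of_move rfl (compile_apply hl 0 _) rfl).trans
    (reaches₁_of_move rfl (compile_apply hl 1 _) rfl)).trans
    (reaches₁_of_move rfl (compile_apply hl 2 _) rfl)).trans
    (reaches₁_of_move rfl (compile_apply hl 3 _) (shift_four d x))

lemma reaches₁_seekMark {d : Dir} {next : Λ} (hl : P l = .seekMark d next) :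
    Reaches₁ (tapeStep (compile P)) ⟨(l, 0), 4 * x + 1, bits letter flags marks⟩
      ⟨(if shift d x ∈ marks then next else l, 0), 4 * shift d x + 1,
        bits letter flags marks⟩ := by
  refine .trans (reaches₁_of_move rfl (compile_apply hl 0 _) rfl) <|
    .trans (reaches₁_of_move rfl (compile_apply hl 1 _) rfl) <|
    .trans (reaches₁_of_move rfl (compile_apply hl 2 _) rfl) <|
    .trans (reaches₁_of_move rfl (compile_apply hl 3 _) (shift_four d x)) ?_
  split_ifs with hx
  · exact reaches₁_of_rewrite (bits_mark.trans (decide_eq_true hx)) (compile_apply hl 4 _)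
  · exact reaches₁_of_rewrite (bits_mark.trans (decide_eq_false hx)) (compile_apply hl 4 _)

lemma reaches₁_branchMark {yes no : Λ} (hl : P l = .branchMark yes no) :
    Reaches₁ (tapeStep (compile P)) ⟨(l, 0), 4 * x + 1, bits letter flags marks⟩
      ⟨(if x ∈ marks then yes else no, 0), 4 * x + 1, bits letter flags marks⟩ := by
  split_ifs with hx
  · exact reaches₁_of_rewrite (bits_mark.trans (decide_eq_true hx)) (compile_apply hl 0 _)
  · exact reaches₁_of_rewrite (bits_mark.trans (decide_eq_false hx)) (compile_apply hl 0 _)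

lemma reaches₁_branchFlag {yes no : Λ} (hl : P l = .branchFlag yes no) :
    Reaches₁ (tapeStep (compile P)) ⟨(l, 0), 4 * x + 1, bits letter flags marks⟩
      ⟨(if x ∈ flags then yes else no, 0), 4 * x + 1, bits letter flags marks⟩ := by
  refine .trans (reaches₁_of_move rfl (compile_apply hl 0 _) (y' := 4 * x + 2)) <|
    .trans (reaches₁_of_move rfl (compile_apply hl 1 _) (y' := 4 * x + 3)) ?_
  split_ifs with hx
  · have hb := (bits_flag (letter := letter) (marks := marks)).trans (decide_eq_true hx)
    exact .trans (reaches₁_of_move hb (compile_apply hl 2 _) (y' := 4 * x + 2))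
      (reaches₁_of_move rfl (compile_apply hl 4 _))
  · have hb := (bits_flag (letter := letter) (marks := marks)).trans (decide_eq_false hx)
    exact .trans (reaches₁_of_move hb (compile_apply hl 2 _) (y' := 4 * x + 2))
      (reaches₁_of_move rfl (compile_apply hl 3 _))

lemma reaches₁_branchLetter {target : Option (Fin 3) → Λ} (hl : P l = .branchLetter target) :
    Reaches₁ (tapeStep (compile P)) ⟨(l, 0), 4 * x + 1, bits letter flags marks⟩
      ⟨(target (letter x), 0), 4 * x + 1, bits letter flags marks⟩ := by
  have hletter := letterOfBits_highBit_lowBit (letter x)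
  have hhigh := bits_high (letter := letter) (flags := flags) (marks := marks) (x := x)
  have hlow := bits_low (letter := letter) (flags := flags) (marks := marks) (x := x)
  rw [← hletter]
  generalize highBit (letter x) = high at hhigh
  generalize lowBit (letter x) = low at hlow
  refine .trans (reaches₁_of_move rfl (compile_apply hl 0 _) (y' := 4 * x)) <|
    .trans (reaches₁_of_move hhigh (compile_apply hl 1 _) (y' := 4 * x + 1)) ?_
  cases high
  · refine .trans (reaches₁_of_move rfl (compile_apply hl 2 _) (y' := 4 * x + 2)) ?_
    cases low <;> exact reaches₁_of_move hlow (compile_apply hl 4 _)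
  · refine .trans (reaches₁_of_move rfl (compile_apply hl 3 _) (y' := 4 * x + 2)) ?_
    cases low <;> exact reaches₁_of_move hlow (compile_apply hl 5 _)

lemma reaches₁_addMark {next : Λ} (hl : P l = .addMark next) :
    Reaches₁ (tapeStep (compile P)) ⟨(l, 0), 4 * x + 1, bits letter flags marks⟩
      ⟨(next, 0), 4 * x + 1, bits letter flags (insert x marks)⟩ :=
  reaches₁_of_write rfl (compile_apply hl 0 _)
    (update_bits_mark (by simp) fun z hz => by simp [hz])

lemma reaches₁_eraseMark {next : Λ} (hl : P l = .eraseMark next) :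
    Reaches₁ (tapeStep (compile P)) ⟨(l, 0), 4 * x + 1, bits letter flags marks⟩
      ⟨(next, 0), 4 * x + 1, bits letter flags (marks.erase x)⟩ :=
  reaches₁_of_write rfl (compile_apply hl 0 _)
    (update_bits_mark (by simp) fun z hz => by simp [hz])

lemma reaches₁_addFlag {next : Λ} (hl : P l = .addFlag next) :
    Reaches₁ (tapeStep (compile P)) ⟨(l, 0), 4 * x + 1, bits letter flags marks⟩
      ⟨(next, 0), 4 * x + 1, bits letter (insert x flags) marks⟩ :=
  .trans (reaches₁_of_move rfl (compile_apply hl 0 _) (y' := 4 * x + 2)) <|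
    .trans (reaches₁_of_move rfl (compile_apply hl 1 _) (y' := 4 * x + 3)) <|
    .trans (reaches₁_of_write rfl (compile_apply hl 2 _) update_bits_flag) <|
    .trans (reaches₁_of_move rfl (compile_apply hl 3 _) (y' := 4 * x + 2)) <|
    reaches₁_of_move rfl (compile_apply hl 4 _)

-- Advancing a letter is adding `1` modulo `4` to the two-bit number that stores it.
lemma nextLetter_letterOfBits (high low : Bool) :
    nextLetter (letterOfBits high low) = letterOfBits (high ^^ low) !low := by
  revert high low; decide

lemma reaches₁_advanceLetter {next overflow : Λ} (hl : P l = .advanceLetter next overflow) :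
    Reaches₁ (tapeStep (compile P)) ⟨(l, 0), 4 * x + 1, bits letter flags marks⟩
      ⟨(if (nextLetter (letter x)).isSome then next else overflow, 0), 4 * x + 1,
        bits (Function.update letter x (nextLetter (letter x))) flags marks⟩ := by
  have hnext := nextLetter_letterOfBits (highBit (letter x)) (lowBit (letter x))
  rw [letterOfBits_highBit_lowBit] at hnext
  rw [hnext]
  refine .trans (reaches₁_of_move rfl (compile_apply hl 0 _) (y' := 4 * x + 2)) <|
    .trans (reaches₁_of_write bits_low (compile_apply hl 1 _) update_bits_low) ?_
  cases lowBit (letter x)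
  · rw [Bool.xor_false]
    cases highBit (letter x) <;> exact reaches₁_of_move rfl (compile_apply hl 2 _)
  · refine .trans (reaches₁_of_move rfl (compile_apply hl 3 _) (y' := 4 * x + 1)) <|
      .trans (reaches₁_of_move rfl (compile_apply hl 4 _) (y' := 4 * x)) <|
      .trans (reaches₁_of_write bits_high (compile_apply hl 5 _) update_bits_high) ?_
    rw [Function.update_self, highBit_letterOfBits, lowBit_letterOfBits, Function.update_idem,
      Bool.xor_true]
    cases highBit (letter x)
    · exact reaches₁_of_move rfl (compile_apply hl 6 _)
    · exact reaches₁_of_move rfl (compile_apply hl 7 _)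

lemma respects_compile (P : Λ → Instr 3 Λ) :
    Respects (step P) (tapeStep (compile P)) fun c C => encode c = C := by
  rintro ⟨l, x, letter, flags, marks⟩ _ rfl
  cases hl : P l <;> simp only [step, encode, hl, exists_eq_left']
  case halt => simp [tapeStep, compile_apply hl, rows]
  case move => exact reaches₁_move hl _
  case seekMark => exact reaches₁_seekMark hl
  case branchMark => exact reaches₁_branchMark hl
  case branchFlag => exact reaches₁_branchFlag hl
  case branchLetter => exact reaches₁_branchLetter hl
  case addMark => exact reaches₁_addMark hl
  case eraseMark => exact reaches₁_eraseMark hl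
  case addFlag => exact reaches₁_addFlag hl
  case advanceLetter => exact reaches₁_advanceLetter hl

end Simulation

lemma encode_blank (x : ℤ) : encode ⟨(default : Λ), x, fun _ => none, ∅, ∅⟩ =
    ⟨default, 4 * x + 1, fun _ => default⟩ := by
  have hbits : bits (fun _ => none) ∅ ∅ = fun _ => default := by
    funext y
    simp [bits, highBit, lowBit, letterIndex]
  rw [encode, hbits]
  rfl

theorem exists_machine_haltsIn [Fintype Λ] {P : Λ → Instr 3 Λ} {N : ℕ}
    (h : HaltsAfter (step P) N ⟨default, x, fun _ => none, ∅, ∅⟩) {n : ℕ} [NeZero n]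
    (hn : ∑ l, (rows l (P l)).length ≤ n) :
    ∃ (M : TM0.Machine (Fin 2) (Fin n)) (T : ℕ), HaltsIn M T ∧ N ≤ T := by
  classical
  obtain ⟨M, R, hM, hinit⟩ := exists_machine_fin (supports_compile P) finTwoEquiv.symm rfl
    ((card_usedStates_le P).trans hn)
  obtain ⟨T, hNT, hT⟩ := (((h.of_respects (respects_compile P) (encode_blank x)).of_respects
    (respects_tapeStep _) (isView_init _)).of_respects hM hinit).exists_haltsFromIn
  exact ⟨M, T, hT, hNT⟩

end Compilation

section Execution

variable {k : ℕ} {Λ : Type} {P : Λ → Instr k Λ} {l a b : Λ} {x y : ℤ}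
  {L : ℤ → Option (Fin k)} {F K K' : Finset ℤ}

lemma reaches_move {d : Dir} (hl : P l = .move d a)
    (hy : shift d x = y := by simp only [shift] <;> ring) :
    Reaches (step P) ⟨l, x, L, F, K⟩ ⟨a, y, L, F, K⟩ :=
  .single (by simp [step, hl, hy])

lemma reaches_branchMark_of_mem (hl : P l = .branchMark a b) (hx : x ∈ K) :
    Reaches (step P) ⟨l, x, L, F, K⟩ ⟨a, x, L, F, K⟩ :=
  .single (by simp [step, hl, hx])

lemma reaches_branchMark_of_notMem (hl : P l = .branchMark a b) (hx : x ∉ K) :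
    Reaches (step P) ⟨l, x, L, F, K⟩ ⟨b, x, L, F, K⟩ :=
  .single (by simp [step, hl, hx])

lemma reaches_branchFlag_of_mem (hl : P l = .branchFlag a b) (hx : x ∈ F) :
    Reaches (step P) ⟨l, x, L, F, K⟩ ⟨a, x, L, F, K⟩ :=
  .single (by simp [step, hl, hx])

lemma reaches_branchFlag_of_notMem (hl : P l = .branchFlag a b) (hx : x ∉ F) :
    Reaches (step P) ⟨l, x, L, F, K⟩ ⟨b, x, L, F, K⟩ :=
  .single (by simp [step, hl, hx])

lemma reaches_branchLetter {target : Option (Fin k) → Λ} (hl : P l = .branchLetter target)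
    {o : Option (Fin k)} (ho : L x = o) (ha : target o = a := by rfl) :
    Reaches (step P) ⟨l, x, L, F, K⟩ ⟨a, x, L, F, K⟩ :=
  .single (by simp [step, hl, ho, ha])

lemma reaches_addMark (hl : P l = .addMark a) (hK : insert x K = K') :
    Reaches (step P) ⟨l, x, L, F, K⟩ ⟨a, x, L, F, K'⟩ :=
  .single (by simp [step, hl, hK])

lemma reaches_eraseMark (hl : P l = .eraseMark a) (hK : K.erase x = K') :
    Reaches (step P) ⟨l, x, L, F, K⟩ ⟨a, x, L, F, K'⟩ :=
  .single (by simp [step, hl, hK])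

lemma reaches_addFlag (hl : P l = .addFlag a) :
    Reaches (step P) ⟨l, x, L, F, K⟩ ⟨a, x, L, insert x F, K⟩ :=
  .single (by simp [step, hl])

lemma reaches_walk_right (hxy : x ≤ y)
    (h : ∀ z, x ≤ z → z < y → Reaches (step P) ⟨l, z, L, F, K⟩ ⟨l, z + 1, L, F, K⟩) :
    Reaches (step P) ⟨l, x, L, F, K⟩ ⟨l, y, L, F, K⟩ :=
  reaches_of_forall_succ (Config.mk l · L F K) hxy h

lemma reaches_walk_left (hyx : y ≤ x)
    (h : ∀ z, y < z → z ≤ x → Reaches (step P) ⟨l, z, L, F, K⟩ ⟨l, z - 1, L, F, K⟩) :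
    Reaches (step P) ⟨l, x, L, F, K⟩ ⟨l, y, L, F, K⟩ :=
  reaches_of_forall_pred (Config.mk l · L F K) hyx h

lemma reaches_seekMark_right (hl : P l = .seekMark .right a) (hxy : x < y) (hy : y ∈ K)
    (hK : ∀ z ∈ K, x < z → y ≤ z) :
    Reaches (step P) ⟨l, x, L, F, K⟩ ⟨a, y, L, F, K⟩ := by
  have hwalk : Reaches (step P) ⟨l, x, L, F, K⟩ ⟨l, y - 1, L, F, K⟩ :=
    reaches_walk_right (by omega) fun z hxz hzy => by
      have hz : z + 1 ∉ K := fun hz => by have := hK _ hz; omega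
      exact .single (by simp [step, hl, shift, hz])
  exact hwalk.trans (.single (by simp [step, hl, shift, hy]))

lemma reaches_seekMark_left (hl : P l = .seekMark .left a) (hyx : y < x) (hy : y ∈ K)
    (hK : ∀ z ∈ K, z < x → z ≤ y) :
    Reaches (step P) ⟨l, x, L, F, K⟩ ⟨a, y, L, F, K⟩ := by
  have hwalk : Reaches (step P) ⟨l, x, L, F, K⟩ ⟨l, y + 1, L, F, K⟩ :=
    reaches_walk_left (by omega) fun z hyz hzx => by
      have hz : z - 1 ∉ K := fun hz => by have := hK _ hz; omega
      exact .single (by simp [step, hl, shift, hz])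
  exact hwalk.trans (.single (by simp [step, hl, shift, hy]))

end Execution

section Words

variable {k : ℕ}

/-- The contents of the cells when the word `w` is written on the cells `0, 1, …` and all other
cells are blank. -/
def written (w : List (Fin k)) : ℤ → Option (Fin k)
  | .ofNat n => w[n]?
  | .negSucc _ => none

variable {w : List (Fin k)}

lemma written_natCast (n : ℕ) : written w n = w[n]? := rfl

lemma written_length : written w w.length = none := by
  simp [written_natCast]

lemma written_neg_one : written w (-1) = none := rfl

lemma written_nil : written ([] : List (Fin k)) = fun _ => none := by
  funext x
  cases x <;> rfl

lemma update_written (w : List (Fin k)) (o o' : Option (Fin k)) :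
    Function.update (written (w ++ o.toList)) w.length o' = written (w ++ o'.toList) := by
  funext x
  cases x with
  | negSucc n => exact Function.update_of_ne (by omega) _ _
  | ofNat n =>
    rcases lt_trichotomy n w.length with hn | rfl | hn
    · rw [Function.update_of_ne (by simpa using hn.ne)]
      simp [written, List.getElem?_append_left hn]
    · cases o' <;> simp [written]
    · rw [Function.update_of_ne (by simpa using hn.ne')]
      have hlen (p : Option (Fin k)) : (w ++ p.toList).length ≤ n := by cases p <;> simp <;> omega
      simp only [written, List.getElem?_eq_none (hlen _)]

variable {Λ : Type} {P : Λ → Instr k Λ} {l s a : Λ} {target : Option (Fin k) → Λ}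
  {F K : Finset ℤ} {x : ℤ}

lemma step_advanceLetter {b : Λ} (hl : P l = .advanceLetter a b) (o : Option (Fin k)) :
    step P ⟨l, w.length, written (w ++ o.toList), F, K⟩ =
      some ⟨if (nextLetter o).isSome then a else b, w.length,
        written (w ++ (nextLetter o).toList), F, K⟩ := by
  have hread : written (w ++ o.toList) w.length = o := by cases o <;> simp [written_natCast]
  simp [step, hl, hread, update_written]

lemma reaches_length (hl : P l = .branchLetter target) (hs : P s = .move .right l)
    (htarget : ∀ c, target (some c) = s) (hx : 0 ≤ x) (hxw : x ≤ w.length)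
    (ha : target none = a := by rfl) :
    Reaches (step P) ⟨l, x, written w, F, K⟩ ⟨a, w.length, written w, F, K⟩ := by
  refine .trans (reaches_walk_right hxw fun z hxz hzw => ?_)
    (reaches_branchLetter hl written_length ha)
  lift z to ℕ using by omega
  have hletter : written w z = some (w[z]'(by omega)) := List.getElem?_eq_getElem _
  exact .trans (reaches_branchLetter hl hletter (htarget _)) (reaches_move hs)

lemma reaches_neg_one (hl : P l = .branchLetter target) (hs : P s = .move .left l)
    (htarget : ∀ c, target (some c) = s) (hx : -1 ≤ x) (hxw : x < w.length)
    (ha : target none = a := by rfl) :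
    Reaches (step P) ⟨l, x, written w, F, K⟩ ⟨a, -1, written w, F, K⟩ := by
  refine .trans (reaches_walk_left hx fun z hz hzx => ?_)
    (reaches_branchLetter hl written_neg_one ha)
  lift z to ℕ using by omega
  have hletter : written w z = some (w[z]'(by omega)) := List.getElem?_eq_getElem _
  exact .trans (reaches_branchLetter hl hletter (htarget _)) (reaches_move hs)

end Words

section Search

/-- Labels of the instructions of the search program over a `k`-letter alphabet. The labels that
take an argument remember a letter of the source block while it is searched for in the last
block. -/
inductive Label (k : ℕ)
  | start | startStep
  | advance | checkBlockEnd | forward | backtrack | afterBacktrack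
  | rewind | rewindStep | nextBlock
  | markSource | toEnd | toEndStep | fromEnd | findTarget | findTargetStep | findTargetTest
  | markTarget | toSource | readSource
  | toTarget (c : Fin k) | eraseTarget (c : Fin k) | scanStep (c : Fin k) | scan (c : Fin k)
  | matched | returnToSource | eraseSource | testSourceEnd | advanceSource | markNextSource
  | embedded | eraseEmbedded | embeddedToEnd | embeddedStep
  | mismatch | eraseMismatch | toSourceEnd | toSourceEndStep
  | measure | measureStep | markCopy | toOriginal | eraseOriginal | testOriginalEnd
  | advanceOriginal | markOriginal | toCopy | eraseCopy | advanceCopy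
  | toLastCopy | eraseLastCopy | stepPastCopy | flagNewEnd | toWord | toWordStep
  | halt
  deriving DecidableEq, Fintype

instance (k : ℕ) : Inhabited (Label k) := ⟨.start⟩

/-- Depth-first search of the tree of admissible words. The current word is written on the cells
`0, 1, …` and the flags sit on the last cells of the blocks of positions. -/
def program (k : ℕ) : Label k → Instr k (Label k)
  | .start => .addFlag .startStep
  | .startStep => .move .left .advance
  -- Replace the letter after the current word by the next one, backtracking after the last one.
  | .advance => .advanceLetter .checkBlockEnd .backtrack
  | .checkBlockEnd => .branchFlag .rewind .forward
  | .forward => .move .right .advance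
  | .backtrack => .move .left .afterBacktrack
  | .afterBacktrack => .branchLetter fun o => if o.isSome then .advance else .halt
  | .rewind => .branchLetter fun o => if o.isSome then .rewindStep else .nextBlock
  | .rewindStep => .move .left .rewind
  | .nextBlock => .move .right .markSource
  -- Mark the first cell of the source block and the cell before the last block.
  | .markSource => .addMark .toEnd
  | .toEnd => .branchLetter fun o => if o.isSome then .toEndStep else .fromEnd
  | .toEndStep => .move .right .toEnd
  | .fromEnd => .move .left .findTarget
  | .findTarget => .branchMark .measure .findTargetStep
  | .findTargetStep => .move .left .findTargetTest
  | .findTargetTest => .branchFlag .markTarget .findTarget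
  | .markTarget => .addMark .toSource
  | .toSource => .seekMark .left .readSource
  -- Match the letters of the source block greedily against the last block.
  | .readSource => .branchLetter fun o => o.elim .halt .toTarget
  | .toTarget c => .seekMark .right (.eraseTarget c)
  | .eraseTarget c => .eraseMark (.scanStep c)
  | .scanStep c => .move .right (.scan c)
  | .scan c =>
    .branchLetter fun o => o.elim .mismatch fun d => if d = c then .matched else .scanStep c
  | .matched => .addMark .returnToSource
  | .returnToSource => .seekMark .left .eraseSource
  | .eraseSource => .eraseMark .testSourceEnd
  | .testSourceEnd => .branchFlag .embedded .advanceSource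
  | .advanceSource => .move .right .markNextSource
  | .markNextSource => .addMark .readSource
  | .embedded => .seekMark .right .eraseEmbedded
  | .eraseEmbedded => .eraseMark .embeddedToEnd
  | .embeddedToEnd => .branchLetter fun o => if o.isSome then .embeddedStep else .backtrack
  | .embeddedStep => .move .right .embeddedToEnd
  | .mismatch => .seekMark .left .eraseMismatch
  | .eraseMismatch => .eraseMark .toSourceEnd
  | .toSourceEnd => .branchFlag .nextBlock .toSourceEndStep
  | .toSourceEndStep => .move .right .toSourceEnd
  -- The source block is the last block: flag the end of the next block by counting its cells off
  -- against those of the last block.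
  | .measure => .branchLetter fun o => if o.isSome then .measureStep else .markCopy
  | .measureStep => .move .right .measure
  | .markCopy => .addMark .toOriginal
  | .toOriginal => .seekMark .left .eraseOriginal
  | .eraseOriginal => .eraseMark .testOriginalEnd
  | .testOriginalEnd => .branchFlag .toLastCopy .advanceOriginal
  | .advanceOriginal => .move .right .markOriginal
  | .markOriginal => .addMark .toCopy
  | .toCopy => .seekMark .right .eraseCopy
  | .eraseCopy => .eraseMark .advanceCopy
  | .advanceCopy => .move .right .markCopy
  | .toLastCopy => .seekMark .right .eraseLastCopy
  | .eraseLastCopy => .eraseMark .stepPastCopy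
  | .stepPastCopy => .move .right .flagNewEnd
  | .flagNewEnd => .addFlag .toWord
  | .toWord => .branchLetter fun o => if o.isSome then .forward else .toWordStep
  | .toWordStep => .move .left .toWord
  | .halt => .halt

lemma sum_length_rows_program : ∑ l, (rows l (program 3 l)).length = 246 := by
  decide +kernel

end Search

section Blocks

/-- The position of the last letter of block `j`. -/
def blockEnd (j : ℕ) : ℕ := blockStart j + (j + 1)

lemma blockStart_succ_eq (j : ℕ) : blockStart (j + 1) = blockEnd j + 1 :=
  blockStart_succ j

lemma blockStart_le_blockEnd {i j : ℕ} (hij : i ≤ j) : blockStart i ≤ blockEnd j :=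
  (blockStart_strictMono.monotone hij).trans (Nat.le_add_right _ _)

/-- `Flagged F n`: the set `F` consists of ends of blocks and contains the ends of all blocks that
start at or before position `n`. -/
structure Flagged (F : Finset ℤ) (n : ℕ) : Prop where
  exists_eq_blockEnd : ∀ z ∈ F, ∃ j, z = blockEnd j
  blockEnd_mem : ∀ j, blockStart j ≤ n → (blockEnd j : ℤ) ∈ F

variable {F : Finset ℤ} {m n : ℕ}

lemma Flagged.notMem (hF : Flagged F n) {j : ℕ} {z : ℤ} (hjz : blockStart j ≤ z)
    (hzj : z < blockEnd j) : z ∉ F := by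
  intro hz
  obtain ⟨i, rfl⟩ := hF.exists_eq_blockEnd z hz
  rcases lt_trichotomy i j with hij | rfl | hij
  · have := blockStart_strictMono.monotone hij
    change blockStart (i + 1) ≤ _ at this
    have := blockStart_succ_eq i
    omega
  · omega
  · have := blockStart_strictMono.monotone hij.le
    unfold blockEnd at hzj
    omega

lemma flagged_zero : Flagged {1} 0 where
  exists_eq_blockEnd z hz := ⟨0, by simpa [blockEnd, blockStart] using hz⟩
  blockEnd_mem j hj := by
    obtain rfl : j = 0 := blockStart_strictMono.injective (Nat.le_zero.1 hj)
    simp [blockEnd, blockStart]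

lemma Flagged.mono (hF : Flagged F n) (hmn : m ≤ n) : Flagged F m :=
  ⟨hF.exists_eq_blockEnd, fun j hj => hF.blockEnd_mem j (hj.trans hmn)⟩

lemma Flagged.succ (hF : Flagged F n) (hn : (n : ℤ) ∉ F) : Flagged F (n + 1) where
  exists_eq_blockEnd := hF.exists_eq_blockEnd
  blockEnd_mem j hj := by
    refine hF.blockEnd_mem j (Nat.lt_succ_iff.1 (hj.lt_of_ne fun heq => ?_))
    obtain _ | j := j
    · simp [blockStart] at heq
    · obtain rfl : blockEnd j = n := by rw [blockStart_succ_eq] at heq; omega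
      exact hn (hF.blockEnd_mem j (blockStart_le_blockEnd le_rfl))

lemma Flagged.insert_blockEnd (hF : Flagged F (blockEnd m)) :
    Flagged (insert (blockEnd (m + 1) : ℤ) F) (blockEnd m + 1) where
  exists_eq_blockEnd z hz := by
    rcases Finset.mem_insert.1 hz with rfl | hz
    exacts [⟨m + 1, rfl⟩, hF.exists_eq_blockEnd z hz]
  blockEnd_mem j hj := by
    rw [← blockStart_succ_eq, blockStart_strictMono.le_iff_le] at hj
    rcases hj.eq_or_lt with rfl | hj
    · exact Finset.mem_insert_self _ _
    · exact Finset.mem_insert_of_mem (hF.blockEnd_mem j (blockStart_le_blockEnd (by omega)))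

end Blocks

section Lists

lemma drop_eq_cons_of_getElem? {α : Type*} {v : List α} {n : ℕ} {a : α} (h : v[n]? = some a) :
    v.drop n = a :: v.drop (n + 1) := by
  obtain ⟨hn, rfl⟩ := List.getElem?_eq_some_iff.1 h
  exact List.drop_eq_getElem_cons hn

lemma eq_or_exists_concat_isPrefix {α : Type*} {u v : List α} (h : u <+: v) :
    v = u ∨ ∃ c, u ++ [c] <+: v := by
  obtain ⟨t, rfl⟩ := h
  cases t <;> simp

end Lists

section SearchRun

variable {k m : ℕ} {w : List (Fin k)} {F : Finset ℤ}

local notation:50 a:51 "⇝" b:51 => Reaches (step (program k)) a b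

lemma reaches_scan_end {c : Fin k} {p e : ℕ} (hpe : p ≤ e) (hen : e < w.length) (he : (e : ℤ) ∈ F)
    (hF : ∀ z : ℤ, p ≤ z → z < e → z ∉ F) :
    ⟨.scan c, w.length, written w, F, {(p : ℤ)}⟩ ⇝ ⟨.markSource, e + 1, written w, F, ∅⟩ :=
  calc
    ⟨.scan c, w.length, written w, F, {(p : ℤ)}⟩
      ⇝ ⟨.mismatch, w.length, written w, F, {(p : ℤ)}⟩ :=
      reaches_branchLetter rfl written_length
    _ ⇝ ⟨.eraseMismatch, p, written w, F, {(p : ℤ)}⟩ :=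
      reaches_seekMark_left rfl (by omega) (by simp) (by simp)
    _ ⇝ ⟨.toSourceEnd, p, written w, F, ∅⟩ := reaches_eraseMark rfl (by simp)
    _ ⇝ ⟨.toSourceEnd, e, written w, F, ∅⟩ :=
      reaches_walk_right (by omega) fun z hpz hze =>
        .trans (reaches_branchFlag_of_notMem rfl (hF z hpz hze)) (reaches_move rfl)
    _ ⇝ ⟨.nextBlock, e, written w, F, ∅⟩ := reaches_branchFlag_of_mem rfl he
    _ ⇝ ⟨.markSource, e + 1, written w, F, ∅⟩ := reaches_move rfl

lemma reaches_testSourceEnd_of_match {c : Fin k} {p y : ℕ} (hpy : p < y) (hy : w[y]? = some c) :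
    ⟨.scan c, y, written w, F, {(p : ℤ)}⟩ ⇝ ⟨.testSourceEnd, p, written w, F, {(y : ℤ)}⟩ :=
  calc
    ⟨.scan c, y, written w, F, {(p : ℤ)}⟩
      ⇝ ⟨.matched, y, written w, F, {(p : ℤ)}⟩ := reaches_branchLetter rfl hy (by simp)
    _ ⇝ ⟨.returnToSource, y, written w, F, {(y : ℤ), (p : ℤ)}⟩ := reaches_addMark rfl rfl
    _ ⇝ ⟨.eraseSource, p, written w, F, {(y : ℤ), (p : ℤ)}⟩ :=
      reaches_seekMark_left rfl (by omega) (by simp) (by simp)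
    _ ⇝ ⟨.testSourceEnd, p, written w, F, {(y : ℤ)}⟩ := reaches_eraseMark rfl (by grind)

lemma reaches_scan_next_letter {c : Fin k} {p y : ℕ} (hpy : p + 1 < y) (hp : (p : ℤ) ∉ F)
    (hc : w[p + 1]? = some c) :
    ⟨.testSourceEnd, p, written w, F, {(y : ℤ)}⟩ ⇝
      ⟨.scan c, y + 1, written w, F, {(p + 1 : ℤ)}⟩ :=
  calc
    ⟨.testSourceEnd, p, written w, F, {(y : ℤ)}⟩
      ⇝ ⟨.advanceSource, p, written w, F, {(y : ℤ)}⟩ := reaches_branchFlag_of_notMem rfl hp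
    _ ⇝ ⟨.markNextSource, p + 1, written w, F, {(y : ℤ)}⟩ := reaches_move rfl
    _ ⇝ ⟨.readSource, p + 1, written w, F, {(p + 1 : ℤ), (y : ℤ)}⟩ := reaches_addMark rfl rfl
    _ ⇝ ⟨.toTarget c, p + 1, written w, F, {(p + 1 : ℤ), (y : ℤ)}⟩ := reaches_branchLetter rfl hc
    _ ⇝ ⟨.eraseTarget c, y, written w, F, {(p + 1 : ℤ), (y : ℤ)}⟩ :=
      reaches_seekMark_right rfl (by omega) (by simp) (by simp)
    _ ⇝ ⟨.scanStep c, y, written w, F, {(p + 1 : ℤ)}⟩ := reaches_eraseMark rfl (by grind)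
    _ ⇝ ⟨.scan c, y + 1, written w, F, {(p + 1 : ℤ)}⟩ := reaches_move rfl

lemma reaches_advance_of_backtrack {n : ℕ} (hn : w.length = n + 1) :
    ⟨.afterBacktrack, n, written w, F, ∅⟩ ⇝ ⟨.advance, n, written w, F, ∅⟩ :=
  reaches_branchLetter rfl (List.getElem?_eq_getElem (by omega))

lemma reaches_advance_of_embedded {e y : ℕ} (hey : e < y) (hyw : y < w.length)
    (he : (e : ℤ) ∈ F) :
    ⟨.testSourceEnd, e, written w, F, {(y : ℤ)}⟩ ⇝ ⟨.advance, w.length - 1, written w, F, ∅⟩ :=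
  calc
    ⟨.testSourceEnd, e, written w, F, {(y : ℤ)}⟩
      ⇝ ⟨.embedded, e, written w, F, {(y : ℤ)}⟩ := reaches_branchFlag_of_mem rfl he
    _ ⇝ ⟨.eraseEmbedded, y, written w, F, {(y : ℤ)}⟩ :=
      reaches_seekMark_right rfl (by omega) (by simp) (by simp)
    _ ⇝ ⟨.embeddedToEnd, y, written w, F, ∅⟩ := reaches_eraseMark rfl (by simp)
    _ ⇝ ⟨.backtrack, w.length, written w, F, ∅⟩ :=
      reaches_length rfl rfl (fun _ => rfl) (by omega) (by omega)
    _ ⇝ ⟨.afterBacktrack, w.length - 1, written w, F, ∅⟩ := reaches_move rfl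
    _ ⇝ ⟨.advance, w.length - 1, written w, F, ∅⟩ := by
      obtain ⟨n, hn⟩ := Nat.exists_eq_add_of_lt hyw
      simpa [hn] using reaches_advance_of_backtrack (F := F) (w := w) (n := y + n) (by omega)

lemma reaches_scan {p e y : ℕ} (hpe : p ≤ e) (hey : e < y) (hyw : y ≤ w.length) (he : (e : ℤ) ∈ F)
    (hF : ∀ z : ℤ, p ≤ z → z < e → z ∉ F) {c : Fin k} (hc : w[p]? = some c) :
    ⟨.scan c, y, written w, F, {(p : ℤ)}⟩ ⇝
      if (w.drop p).take (e + 1 - p) <+ w.drop y then ⟨.advance, w.length - 1, written w, F, ∅⟩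
      else ⟨.markSource, e + 1, written w, F, ∅⟩ := by
  rw [show e + 1 - p = (e - p) + 1 by omega, drop_eq_cons_of_getElem? hc, List.take_succ_cons]
  induction hyw using Nat.decreasingInduction generalizing p c with
  | self =>
    rw [List.drop_length, if_neg (by simp)]
    exact reaches_scan_end hpe hey he hF
  | of_succ y hyw ih =>
    have hy : w[y]? = some w[y] := List.getElem?_eq_getElem hyw
    rw [drop_eq_cons_of_getElem? hy]
    by_cases hyc : w[y] = c
    · simp only [hyc, List.cons_sublist_cons]
      refine .trans (reaches_testSourceEnd_of_match (by omega) (hyc ▸ hy)) ?_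
      rcases hpe.eq_or_lt with rfl | hpe
      · rw [if_pos (by simp)]
        exact reaches_advance_of_embedded hey hyw he
      · have hp : w[p + 1]? = some (w[p + 1]'(by omega)) := List.getElem?_eq_getElem _
        rw [show e - p = (e - (p + 1)) + 1 by omega, drop_eq_cons_of_getElem? hp,
          List.take_succ_cons]
        exact .trans (reaches_scan_next_letter (by omega) (hF p le_rfl (by omega)) hp)
          (mod_cast ih hpe (by omega) (fun z hpz => hF z (by omega)) hp)
    · simp only [List.cons_sublist_cons', Ne.symm hyc, false_and, or_false]
      calc
        ⟨.scan c, y, written w, F, {(p : ℤ)}⟩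
          ⇝ ⟨.scanStep c, y, written w, F, {(p : ℤ)}⟩ :=
          reaches_branchLetter rfl hy (by simp [hyc])
        _ ⇝ ⟨.scan c, y + 1, written w, F, {(p : ℤ)}⟩ := reaches_move rfl
        _ ⇝ _ := mod_cast ih hpe (by omega) hF hc

lemma reaches_findTarget (hF : Flagged F (blockEnd m)) (hw : w.length = blockStart (m + 1))
    {s : ℕ} (hs : s ≤ blockStart m) :
    ⟨.markSource, s, written w, F, ∅⟩ ⇝ ⟨.findTarget, blockStart m, written w, F, {(s : ℤ)}⟩ := by
  have hend : w.length = blockStart m + (m + 2) := hw.trans (blockStart_succ m)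
  calc
    ⟨.markSource, s, written w, F, ∅⟩
      ⇝ ⟨.toEnd, s, written w, F, {(s : ℤ)}⟩ := reaches_addMark rfl (insert_empty_eq _)
    _ ⇝ ⟨.fromEnd, w.length, written w, F, {(s : ℤ)}⟩ :=
      reaches_length rfl rfl (fun _ => rfl) (by omega) (by omega)
    _ ⇝ ⟨.findTarget, w.length - 1, written w, F, {(s : ℤ)}⟩ := reaches_move rfl
    _ ⇝ ⟨.findTarget, blockStart m, written w, F, {(s : ℤ)}⟩ :=
      reaches_walk_left (by omega) fun z hmz hzw => calc
        ⟨.findTarget, z, written w, F, {(s : ℤ)}⟩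
          ⇝ ⟨.findTargetStep, z, written w, F, {(s : ℤ)}⟩ :=
          reaches_branchMark_of_notMem rfl (by rw [Finset.mem_singleton]; omega)
        _ ⇝ ⟨.findTargetTest, z - 1, written w, F, {(s : ℤ)}⟩ := reaches_move rfl
        _ ⇝ ⟨.findTarget, z - 1, written w, F, {(s : ℤ)}⟩ :=
          reaches_branchFlag_of_notMem rfl
            (hF.notMem (j := m) (by omega) (by unfold blockEnd; omega))

lemma reaches_scan_start (hF : Flagged F (blockEnd m)) {s : ℕ} (hs : s + 2 ≤ blockStart m)
    {c : Fin k} (hc : w[s]? = some c) :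
    ⟨.findTarget, blockStart m, written w, F, {(s : ℤ)}⟩ ⇝
      ⟨.scan c, blockStart m, written w, F, {(s : ℤ)}⟩ := by
  obtain ⟨t, rfl⟩ : ∃ t, m = t + 1 :=
    Nat.exists_eq_succ_of_ne_zero (by rintro rfl; simp [blockStart] at hs)
  have ht : (blockEnd t : ℤ) ∈ F := hF.blockEnd_mem t (blockStart_le_blockEnd t.le_succ)
  rw [blockStart_succ_eq] at hs ⊢
  calc
    ⟨.findTarget, (blockEnd t + 1 : ℕ), written w, F, {(s : ℤ)}⟩
      ⇝ ⟨.findTargetStep, (blockEnd t + 1 : ℕ), written w, F, {(s : ℤ)}⟩ :=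
      reaches_branchMark_of_notMem rfl (by rw [Finset.mem_singleton]; omega)
    _ ⇝ ⟨.findTargetTest, blockEnd t, written w, F, {(s : ℤ)}⟩ := reaches_move rfl (by simp [shift])
    _ ⇝ ⟨.markTarget, blockEnd t, written w, F, {(s : ℤ)}⟩ := reaches_branchFlag_of_mem rfl ht
    _ ⇝ ⟨.toSource, blockEnd t, written w, F, {(blockEnd t : ℤ), (s : ℤ)}⟩ :=
      reaches_addMark rfl rfl
    _ ⇝ ⟨.readSource, s, written w, F, {(blockEnd t : ℤ), (s : ℤ)}⟩ :=
      reaches_seekMark_left rfl (by omega) (by simp) (by simp)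
    _ ⇝ ⟨.toTarget c, s, written w, F, {(blockEnd t : ℤ), (s : ℤ)}⟩ := reaches_branchLetter rfl hc
    _ ⇝ ⟨.eraseTarget c, blockEnd t, written w, F, {(blockEnd t : ℤ), (s : ℤ)}⟩ :=
      reaches_seekMark_right rfl (by omega) (by simp) (by simp)
    _ ⇝ ⟨.scanStep c, blockEnd t, written w, F, {(s : ℤ)}⟩ := reaches_eraseMark rfl (by grind)
    _ ⇝ ⟨.scan c, (blockEnd t + 1 : ℕ), written w, F, {(s : ℤ)}⟩ :=
      reaches_move rfl (by simp [shift])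

lemma reaches_compare (hF : Flagged F (blockEnd m)) (hw : w.length = blockStart (m + 1)) {i : ℕ}
    (him : i < m) :
    ⟨.markSource, blockStart i, written w, F, ∅⟩ ⇝
      if block w i <+ block w m then ⟨.advance, w.length - 1, written w, F, ∅⟩
      else ⟨.markSource, blockStart (i + 1), written w, F, ∅⟩ := by
  have hnext : blockStart (i + 1) ≤ blockStart m := blockStart_strictMono.monotone him
  have hlast : blockStart m < w.length := hw ▸ blockStart_strictMono (Nat.lt_succ_self m)
  have hi := blockStart_succ_eq i
  have hend : blockEnd i = blockStart i + (i + 1) := rfl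
  have hc : w[blockStart i]? = some (w[blockStart i]'(by omega)) := List.getElem?_eq_getElem _
  have hscan := reaches_scan (w := w) (F := F) (p := blockStart i) (e := blockEnd i)
    (y := blockStart m) (by omega) (by omega) hlast.le
    (hF.blockEnd_mem i (blockStart_le_blockEnd him.le)) (fun _ => hF.notMem) hc
  rw [show blockEnd i + 1 - blockStart i = i + 2 by omega, ← block_eq_drop hw] at hscan
  rw [hi]
  exact .trans (reaches_findTarget hF hw (by omega))
    (.trans (reaches_scan_start hF (by omega) hc) (mod_cast hscan))

lemma reaches_compare_all (hF : Flagged F (blockEnd m)) (hw : w.length = blockStart (m + 1)) {i : ℕ}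
    (him : i ≤ m) :
    ⟨.markSource, blockStart i, written w, F, ∅⟩ ⇝
      if ∃ j ∈ Finset.Ico i m, block w j <+ block w m then
        ⟨.advance, w.length - 1, written w, F, ∅⟩
      else ⟨.markSource, blockStart m, written w, F, ∅⟩ := by
  induction him using Nat.decreasingInduction with
  | self =>
    rw [if_neg (by simp)]
    exact .refl
  | of_succ i him ih =>
    have hcompare := reaches_compare hF hw him
    split_ifs at hcompare with hi
    · rwa [if_pos ⟨i, by simpa using him, hi⟩]
    · have hiff : (∃ j ∈ Finset.Ico i m, block w j <+ block w m) ↔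
          ∃ j ∈ Finset.Ico (i + 1) m, block w j <+ block w m := by
        rw [← Finset.insert_Ico_add_one_left_eq_Ico him, Finset.exists_mem_insert]
        simp only [hi, false_or]
      simp only [hiff]
      exact hcompare.trans ih

lemma reaches_testOriginalEnd {x y : ℤ} {L : ℤ → Option (Fin k)} (hxy : x < y) :
    ⟨.markCopy, y, L, F, {x}⟩ ⇝ ⟨.testOriginalEnd, x, L, F, {y}⟩ :=
  calc
    ⟨.markCopy, y, L, F, {x}⟩
      ⇝ ⟨.toOriginal, y, L, F, {y, x}⟩ := reaches_addMark rfl rfl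
    _ ⇝ ⟨.eraseOriginal, x, L, F, {y, x}⟩ :=
      reaches_seekMark_left rfl (by omega) (by simp) (by simp)
    _ ⇝ ⟨.testOriginalEnd, x, L, F, {y}⟩ := reaches_eraseMark rfl (by grind)

lemma reaches_markCopy_succ {x y : ℤ} {L : ℤ → Option (Fin k)} (hxy : x + 1 < y)
    (hx : x ∉ F) :
    ⟨.markCopy, y, L, F, {x}⟩ ⇝ ⟨.markCopy, y + 1, L, F, {x + 1}⟩ :=
  calc
    ⟨.markCopy, y, L, F, {x}⟩
      ⇝ ⟨.testOriginalEnd, x, L, F, {y}⟩ := reaches_testOriginalEnd (by omega)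
    _ ⇝ ⟨.advanceOriginal, x, L, F, {y}⟩ := reaches_branchFlag_of_notMem rfl hx
    _ ⇝ ⟨.markOriginal, x + 1, L, F, {y}⟩ := reaches_move rfl
    _ ⇝ ⟨.toCopy, x + 1, L, F, {x + 1, y}⟩ := reaches_addMark rfl rfl
    _ ⇝ ⟨.eraseCopy, y, L, F, {x + 1, y}⟩ :=
      reaches_seekMark_right rfl (by omega) (by simp) (by simp)
    _ ⇝ ⟨.advanceCopy, y, L, F, {x + 1}⟩ := reaches_eraseMark rfl (by grind)
    _ ⇝ ⟨.markCopy, y + 1, L, F, {x + 1}⟩ := reaches_move rfl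

lemma reaches_toWord {x y : ℤ} {L : ℤ → Option (Fin k)} (hxy : x < y) (hx : x ∈ F) :
    ⟨.markCopy, y, L, F, {x}⟩ ⇝ ⟨.toWord, y + 1, L, insert (y + 1) F, ∅⟩ :=
  calc
    ⟨.markCopy, y, L, F, {x}⟩
      ⇝ ⟨.testOriginalEnd, x, L, F, {y}⟩ := reaches_testOriginalEnd hxy
    _ ⇝ ⟨.toLastCopy, x, L, F, {y}⟩ := reaches_branchFlag_of_mem rfl hx
    _ ⇝ ⟨.eraseLastCopy, y, L, F, {y}⟩ :=
      reaches_seekMark_right rfl (by omega) (by simp) (by simp)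
    _ ⇝ ⟨.stepPastCopy, y, L, F, ∅⟩ := reaches_eraseMark rfl (by simp)
    _ ⇝ ⟨.flagNewEnd, y + 1, L, F, ∅⟩ := reaches_move rfl
    _ ⇝ ⟨.toWord, y + 1, L, insert (y + 1) F, ∅⟩ := reaches_addFlag rfl

lemma reaches_advance_of_toWord (hw : w ≠ []) {y : ℕ} (hy : w.length ≤ y) :
    ⟨.toWord, y, written w, F, ∅⟩ ⇝ ⟨.advance, w.length, written w, F, ∅⟩ :=
  have hlast : written w (w.length - 1) = some (w.getLast hw) := by
    obtain ⟨v, c, rfl⟩ := List.eq_nil_or_concat w |>.resolve_left hw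
    simp [written_natCast]
  calc
    ⟨.toWord, y, written w, F, ∅⟩
      ⇝ ⟨.toWord, w.length - 1, written w, F, ∅⟩ :=
      reaches_walk_left (by omega) fun z hwz _ => by
        lift z to ℕ using by omega
        have hz : written w z = none := List.getElem?_eq_none (by omega)
        exact .trans (reaches_branchLetter rfl hz) (reaches_move rfl)
    _ ⇝ ⟨.forward, w.length - 1, written w, F, ∅⟩ := reaches_branchLetter rfl hlast
    _ ⇝ ⟨.advance, w.length, written w, F, ∅⟩ := reaches_move rfl

lemma reaches_markCopy (hF : Flagged F (blockEnd m)) (hw : w.length = blockStart (m + 1)) :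
    ⟨.markSource, blockStart m, written w, F, ∅⟩ ⇝
      ⟨.markCopy, w.length, written w, F, {(blockStart m : ℤ)}⟩ :=
  have hlast : blockStart m < w.length := hw ▸ blockStart_strictMono (lt_add_one m)
  calc
    ⟨.markSource, blockStart m, written w, F, ∅⟩
      ⇝ ⟨.findTarget, blockStart m, written w, F, {(blockStart m : ℤ)}⟩ :=
      reaches_findTarget hF hw le_rfl
    _ ⇝ ⟨.measure, blockStart m, written w, F, {(blockStart m : ℤ)}⟩ :=
      reaches_branchMark_of_mem rfl (by simp)
    _ ⇝ ⟨.markCopy, w.length, written w, F, {(blockStart m : ℤ)}⟩ :=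
      reaches_length rfl rfl (fun _ => rfl) (by omega) (by omega)

lemma reaches_markCopy_blockEnd (hF : Flagged F (blockEnd m)) {x : ℤ} (hx : blockEnd m < x)
    {L : ℤ → Option (Fin k)} :
    ⟨.markCopy, x, L, F, {(blockStart m : ℤ)}⟩ ⇝
      ⟨.markCopy, x + (m + 1), L, F, {(blockEnd m : ℤ)}⟩ := by
  have hend : blockEnd m = blockStart m + (m + 1) := rfl
  simpa [hend] using reaches_of_forall_succ (f := step (program k)) (x := 0) (y := m + 1)
    (fun d => ⟨.markCopy, x + d, L, F, {blockStart m + d}⟩) (by omega) fun d _ hd => by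
      simp only [← add_assoc]
      exact reaches_markCopy_succ (by omega) (hF.notMem (j := m) (by omega) (by omega))

lemma reaches_advance_of_last_block (hF : Flagged F (blockEnd m))
    (hw : w.length = blockStart (m + 1)) :
    ⟨.markSource, blockStart m, written w, F, ∅⟩ ⇝
      ⟨.advance, w.length, written w, insert (blockEnd (m + 1) : ℤ) F, ∅⟩ := by
  have hend : w.length = blockEnd m + 1 := hw.trans (blockStart_succ_eq m)
  have hnew : w.length + (m + 1) + 1 = blockEnd (m + 1) := by rw [hw, blockEnd]; ring
  calc
    ⟨.markSource, blockStart m, written w, F, ∅⟩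
      ⇝ ⟨.markCopy, w.length, written w, F, {(blockStart m : ℤ)}⟩ := reaches_markCopy hF hw
    _ ⇝ ⟨.markCopy, w.length + (m + 1), written w, F, {(blockEnd m : ℤ)}⟩ :=
      reaches_markCopy_blockEnd hF (by omega)
    _ ⇝ ⟨.toWord, w.length + (m + 1) + 1, written w, insert (w.length + (m + 1) + 1 : ℤ) F, ∅⟩ :=
      reaches_toWord (by omega) (hF.blockEnd_mem m (blockStart_le_blockEnd le_rfl))
    _ ⇝ ⟨.advance, w.length, written w, insert (blockEnd (m + 1) : ℤ) F, ∅⟩ := by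
      rw [← hnew]
      exact_mod_cast reaches_advance_of_toWord (w := w) (List.ne_nil_of_length_pos (by omega))
        (by omega)

lemma reaches_checkBlockEnd (hF : Flagged F (blockEnd m))
    (hw : w.length = blockStart (m + 1)) :
    ⟨.checkBlockEnd, blockEnd m, written w, F, ∅⟩ ⇝
      if ∃ j < m, block w j <+ block w m then ⟨.advance, blockEnd m, written w, F, ∅⟩
      else ⟨.advance, w.length, written w, insert (blockEnd (m + 1) : ℤ) F, ∅⟩ := by
  have hend : w.length = blockEnd m + 1 := hw.trans (blockStart_succ_eq m)
  have hcompare := reaches_compare_all hF hw (Nat.zero_le m)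
  simp only [Nat.Ico_zero_eq_range, Finset.mem_range, hend, Nat.cast_add, Nat.cast_one,
    add_sub_cancel_right] at hcompare
  calc
    ⟨.checkBlockEnd, blockEnd m, written w, F, ∅⟩
      ⇝ ⟨.rewind, blockEnd m, written w, F, ∅⟩ :=
      reaches_branchFlag_of_mem rfl (hF.blockEnd_mem m (blockStart_le_blockEnd le_rfl))
    _ ⇝ ⟨.nextBlock, -1, written w, F, ∅⟩ :=
      reaches_neg_one rfl rfl (fun _ => rfl) (by omega) (by omega)
    _ ⇝ ⟨.markSource, 0, written w, F, ∅⟩ := reaches_move rfl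
    _ ⇝ _ := hcompare
    _ ⇝ _ := by
      split_ifs
      exacts [.refl, reaches_advance_of_last_block hF hw]

lemma reaches_checkBlockEnd_of_not_admissible {c : Fin k} (hw : Admissible w)
    (hc : ¬ Admissible (w ++ [c])) (hF : Flagged F w.length) :
    ⟨.checkBlockEnd, w.length, written (w ++ [c]), F, ∅⟩ ⇝
      ⟨.advance, w.length, written (w ++ [c]), F, ∅⟩ := by
  obtain ⟨i, m, him, hm, hsub⟩ : ∃ i m, i < m ∧ blockStart (m + 1) = w.length + 1 ∧
      block (w ++ [c]) i <+ block (w ++ [c]) m := by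
    by_contra! h
    exact hc (hw.concat c h)
  have hend : w.length = blockEnd m := by rw [blockStart_succ_eq] at hm; omega
  have hcheck := reaches_checkBlockEnd (hend ▸ hF) (w := w ++ [c])
    (List.length_append.trans hm.symm)
  rwa [if_pos ⟨i, him, hsub⟩, ← hend] at hcheck

lemma reaches_checkBlockEnd_of_admissible {c : Fin k} (hc : Admissible (w ++ [c]))
    (hF : Flagged F w.length) :
    ∃ F', Flagged F' (w ++ [c]).length ∧ ⟨.checkBlockEnd, w.length, written (w ++ [c]), F, ∅⟩ ⇝
      ⟨.advance, (w ++ [c]).length, written (w ++ [c]), F', ∅⟩ := by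
  have hlen : (w ++ [c]).length = w.length + 1 := List.length_append
  by_cases hn : (w.length : ℤ) ∈ F
  · obtain ⟨m, hm⟩ := hF.exists_eq_blockEnd _ hn
    have hend : w.length = blockEnd m := by exact_mod_cast hm
    have hnext : (w ++ [c]).length = blockStart (m + 1) := by rw [hlen, hend, blockStart_succ_eq]
    have hcheck := reaches_checkBlockEnd (hend ▸ hF) hnext
    rw [if_neg (by rintro ⟨j, hjm, hsub⟩; exact hc j m hjm hnext.ge hsub), ← hend] at hcheck
    refine ⟨_, ?_, hcheck⟩
    rw [hlen, hend]
    exact (hend ▸ hF).insert_blockEnd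
  · refine ⟨F, hlen ▸ hF.succ hn, .trans (reaches_branchFlag_of_notMem rfl hn) ?_⟩
    exact reaches_move rfl (by simp [shift])

/-- `Explores w`: started at the cell after the word `w`, the program returns to the last letter of
`w`, and the number of its steps bounds the depth of the subtree of admissible words below `w`. -/
def Explores (w : List (Fin k)) : Prop :=
  ∀ F, Flagged F w.length → ∃ F' s, Flagged F' w.length ∧
    Leads (step (program k)) s ⟨.advance, w.length, written w, F, ∅⟩
      ⟨.afterBacktrack, w.length - 1, written w, F', ∅⟩ ∧
    ∀ v, Admissible v → w <+: v → v.length < w.length + s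

lemma exists_leads_of_child {c : Fin k} (hw : Admissible w)
    (hexp : Admissible (w ++ [c]) → Explores (w ++ [c])) (hF : Flagged F w.length) :
    ∃ F' s, Flagged F' w.length ∧
      Leads (step (program k)) s ⟨.checkBlockEnd, w.length, written (w ++ [c]), F, ∅⟩
        ⟨.advance, w.length, written (w ++ [c]), F', ∅⟩ ∧
      ∀ v, Admissible v → w ++ [c] <+: v → v.length < w.length + 1 + s := by
  have hlen : (w ++ [c]).length = w.length + 1 := List.length_append
  by_cases hc : Admissible (w ++ [c])
  · obtain ⟨F₁, hF₁, hdown⟩ := reaches_checkBlockEnd_of_admissible hc hF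
    obtain ⟨F₂, s, hF₂, hsub, hbound⟩ := hexp hc F₁ hF₁
    rw [hlen] at hbound
    have hup : ⟨.afterBacktrack, (w ++ [c]).length - 1, written (w ++ [c]), F₂, ∅⟩ ⇝
        ⟨.advance, w.length, written (w ++ [c]), F₂, ∅⟩ := by
      simpa [hlen] using reaches_advance_of_backtrack (F := F₂) hlen
    exact ⟨F₂, s, hF₂.mono (by omega),
      (((Leads.of_reaches hdown).trans hsub).trans (.of_reaches hup)).mono (by omega), hbound⟩
  · exact ⟨F, 0, hF, .of_reaches (reaches_checkBlockEnd_of_not_admissible hw hc hF),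
      fun v hv hpre => absurd (hv.of_isPrefix hpre) hc⟩

lemma exists_leads_of_advance (hw : Admissible w)
    (hexp : ∀ c, Admissible (w ++ [c]) → Explores (w ++ [c])) (o : Option (Fin k))
    (hF : Flagged F w.length) :
    ∃ F' s, Flagged F' w.length ∧
      Leads (step (program k)) s ⟨.advance, w.length, written (w ++ o.toList), F, ∅⟩
        ⟨.afterBacktrack, w.length - 1, written w, F', ∅⟩ ∧
      0 < s ∧ ∀ c : Fin k, letterIndex o ≤ c → ∀ v, Admissible v → w ++ [c] <+: v →
        v.length < w.length + s := by
  have hstep (F : Finset ℤ) (o : Option (Fin k)) :=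
    step_advanceLetter (P := program k) (l := .advance) (w := w) (F := F) (K := ∅) rfl o
  induction hi : k - letterIndex o generalizing o F with
  | zero =>
    have hnext : nextLetter o = none := dif_neg (by omega)
    have hoverflow := hstep F o
    simp only [hnext, Option.toList_none, List.append_nil] at hoverflow
    exact ⟨F, 1, hF, .head hoverflow (.of_reaches (reaches_move rfl)) le_rfl, one_pos,
      fun c hc => by omega⟩
  | succ i ih =>
    let d : Fin k := ⟨letterIndex o, by omega⟩
    have hnext : nextLetter o = some d := dif_pos d.isLt
    have hadvance := hstep F o
    simp only [hnext, Option.toList_some, Option.isSome_some, if_true] at hadvance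
    obtain ⟨F₁, s₁, hF₁, hchild, hbound₁⟩ := exists_leads_of_child hw (hexp d) hF
    obtain ⟨F₂, s₂, hF₂, hrest, -, hbound₂⟩ :=
      ih (some d) hF₁ (show k - (letterIndex o + 1) = i by omega)
    refine ⟨F₂, s₁ + s₂ + 1, hF₂, .head hadvance (hchild.trans hrest) le_rfl, by omega,
      fun c hc v hv hpre => ?_⟩
    rcases eq_or_lt_of_le (show d ≤ c from hc) with rfl | hdc
    · have := hbound₁ v hv hpre
      omega
    · have := hbound₂ c hdc v hv hpre
      omega

lemma explores_of_admissible (hw : Admissible w) : Explores w := by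
  induction w using (wellFounded_admissibleChild (α := Fin k)).induction with
  | _ w ih =>
    intro F hF
    obtain ⟨F', s, hF', hleads, hs, hbound⟩ :=
      exists_leads_of_advance hw (fun c hc => ih _ ⟨hc, c, rfl⟩ hc) none hF
    rw [Option.toList_none, List.append_nil] at hleads
    refine ⟨F', s, hF', hleads, fun v hv hpre => ?_⟩
    rcases eq_or_exists_concat_isPrefix hpre with rfl | ⟨c, hc⟩
    · omega
    · exact hbound c (Nat.zero_le _) v hv hc

variable (k) in
theorem exists_haltsAfter_program :
    ∃ N, HaltsAfter (step (program k)) N ⟨default, 1, fun _ => none, ∅, ∅⟩ ∧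
      ∀ w : List (Fin k), Admissible w → w.length < N := by
  obtain ⟨F, s, -, hleads, hbound⟩ := explores_of_admissible admissible_nil {1} flagged_zero
  rw [← written_nil]
  have hstart : ⟨.start, 1, written [], ∅, ∅⟩ ⇝ ⟨.advance, 0, written [], {1}, ∅⟩ :=
    .trans (reaches_addFlag rfl) (reaches_move rfl)
  have hhalt : ⟨.afterBacktrack, -1, written [], F, ∅⟩ ⇝ ⟨.halt, -1, written [], F, ∅⟩ :=
    reaches_branchLetter rfl written_neg_one
  refine ⟨s, ⟨⟨.halt, -1, written [], F, ∅⟩, ?_, rfl⟩,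
    fun w hw => by simpa using hbound w hw ⟨w, rfl⟩⟩
  exact (((Leads.of_reaches hstart).trans hleads).trans (.of_reaches hhalt)).mono (by omega)

end SearchRun

end FriedmanSearch

theorem tm_276_2_exceeds_n3_general (n : ℕ) [NeZero n] (hn : 246 ≤ n) :
    ∃ (M : Turing.TM0.Machine (Fin 2) (Fin n)) (T : ℕ),
      HaltsIn M T ∧ friedmanN 3 < T := by
  obtain ⟨N, hhalts, hbound⟩ := FriedmanSearch.exists_haltsAfter_program 3
  obtain ⟨M, T, hM, hNT⟩ := FriedmanSearch.exists_machine_haltsIn hhalts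
    (FriedmanSearch.sum_length_rows_program.trans_le hn)
  exact ⟨M, T, hM, (FriedmanSearch.friedmanN_lt hbound).trans_le hNT⟩

/-- There is a Turing machine with 276 states and 2 tape symbols which halts on
the blank tape after more than n(3) steps. -/
theorem tm_276_2_exceeds_n3 :
    ∃ (M : Turing.TM0.Machine (Fin 2) (Fin 276)) (T : ℕ),
      HaltsIn M T ∧ friedmanN 3 < T := by
  exact tm_276_2_exceeds_n3_general 276 (by norm_num)
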